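/- For t = T−1,…,0 define recursively J_t(π²) := min over u_t² ∈ 𝒰_t^2 and prescriptions γ_t^{[2,1]} : Δ(𝒳_t) → 𝒰_t^1 of [ c̃_t^2(π², γ_t^{[2,1]}, u_t²) + E^{(g,ψ^2)}[J_{t+1}(Π_{t+1}^2) | Π_t^2 = π², Γ_t^{[2,1]} = γ_t^{[2,1]}, U_t^2 = u_t²] ], with boundary condition J_T = J_T^2. Then for every t = 0,…,T−1: (1) for every admissible team strategy g of the structural form U_ℓ^1 = g_ℓ^1(Π_ℓ^1, Π_ℓ^2), U_ℓ^2 = g_ℓ^2(Π_ℓ^2), the cost-to-go satisfies 𝒥_t(g) ≥ E^{(g,ψ^2)}[J_t(Π_t^2)]; and (2) the argmin prescription and control laws (ψ_t^{*[2,1]}, g_t^{*2}), together with g_t^{*1}(Π_t^1, Π_t^2) := ψ_t^{*[2,1]}(Π_t^2)(Π_t^1) and the optimal laws g_{t+1:T}^* from later stages, achieve equality: 𝒥_t(g_{0:t−1}, g_t^{*1}, g_t^{*2}, g_{t+1:T}^*) = E^{(g,ψ^2)}[J_t(Π_t^2)]. -/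

import Mathlib

/-!
Common framework: a two-agent sequential dynamic team with nested information
structure (Dave & Malikopoulos, "Structural results for decentralized
stochastic control with a nested information structure").

* `X t` : state space at time `t`; `U1 t`, `U2 t` : action spaces of agents 1 and 2;
* `W t` : disturbance; `V1 t`, `V2 t` : measurement noises; `Y1 t`, `Y2 t` : observations.
* Dynamics `X_{t+1} = f t X_t U¹_t U²_t W_t`, observations `Y^k_t = h^k t X_t V^k_t`.
* Memories `M²_t = (Y²_{0:t}, U²_{0:t-1})`, `L_t^{[1,2]} = (Y¹_{0:t}, U¹_{0:t-1})`,
  `M¹_t = (L_t^{[1,2]}, M²_t)` (nested information).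
* The primitive random variables are independent with given PMFs; the sample
  space for horizon `T` is `ΩT`, with the product mass function `mass`.
-/

open scoped Classical
open Finset

namespace NestedTeam

noncomputable section

/-- Memory of agent 2 at time `t`: observations `Y²₀,…,Y²ₜ` and actions `U²₀,…,U²ₜ₋₁`. -/
abbrev M2 (Y2 U2 : ℕ → Type) (t : ℕ) : Type :=
  ((s : Fin (t + 1)) → Y2 s) × ((s : Fin t) → U2 s)

/-- The private information `L_t^{[1,2]} = M¹_t \ M²_t` of agent 1. -/
abbrev Lp (Y1 U1 : ℕ → Type) (t : ℕ) : Type :=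
  ((s : Fin (t + 1)) → Y1 s) × ((s : Fin t) → U1 s)

/-- Memory of agent 1 at time `t` (nested information: it contains `M²_t`). -/
abbrev M1 (Y1 Y2 U1 U2 : ℕ → Type) (t : ℕ) : Type :=
  Lp Y1 U1 t × M2 Y2 U2 t

/-- The system: dynamics, observation maps and per-stage cost. -/
structure Sys (X U1 U2 W V1 V2 Y1 Y2 : ℕ → Type) where
  f : ∀ t, X t → U1 t → U2 t → W t → X (t + 1)
  h1 : ∀ t, X t → V1 t → Y1 t
  h2 : ∀ t, X t → V2 t → Y2 t
  c : ∀ t, X t → U1 t → U2 t → ℝ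

/-- A control strategy profile: `U¹_t = g1 t M¹_t`, `U²_t = g2 t M²_t`. -/
structure Strat (U1 U2 Y1 Y2 : ℕ → Type) where
  g1 : ∀ t, M1 Y1 Y2 U1 U2 t → U1 t
  g2 : ∀ t, M2 Y2 U2 t → U2 t

/-- A realization of the primitive random variables. -/
structure Prim (X W V1 V2 : ℕ → Type) where
  x0 : X 0
  w : ∀ t, W t
  v1 : ∀ t, V1 t
  v2 : ∀ t, V2 t

variable {X U1 U2 W V1 V2 Y1 Y2 : ℕ → Type}

/-- The closed-loop trajectory: states `X_{0:t}` and actions `U^{1:2}_{0:t-1}`. -/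
def hist (S : Sys X U1 U2 W V1 V2 Y1 Y2) (g : Strat U1 U2 Y1 Y2) (ρ : Prim X W V1 V2) :
    (t : ℕ) → ((s : Fin (t + 1)) → X s) × ((s : Fin t) → U1 s × U2 s)
  | 0 => (Fin.cons (α := fun s : Fin 1 => X s) ρ.x0 (fun i => i.elim0), fun i => i.elim0)
  | t + 1 =>
    let p := hist S g ρ t
    let y1 : (s : Fin (t + 1)) → Y1 s := fun s => S.h1 s (p.1 s) (ρ.v1 s)
    let y2 : (s : Fin (t + 1)) → Y2 s := fun s => S.h2 s (p.1 s) (ρ.v2 s)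
    let m1 : M1 Y1 Y2 U1 U2 t := ((y1, fun s => (p.2 s).1), (y2, fun s => (p.2 s).2))
    let a1 := g.g1 t m1
    let a2 := g.g2 t m1.2
    (Fin.snoc (α := fun s : Fin (t + 2) => X s) p.1 (S.f t (p.1 (Fin.last t)) a1 a2 (ρ.w t)),
     Fin.snoc (α := fun s : Fin (t + 1) => U1 s × U2 s) p.2 (a1, a2))

/-- State `X_t` along the closed loop. -/
def xTraj (S : Sys X U1 U2 W V1 V2 Y1 Y2) (g : Strat U1 U2 Y1 Y2) (ρ : Prim X W V1 V2)
    (t : ℕ) : X t := (hist S g ρ t).1 (Fin.last t)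

/-- `L_t^{[1,2]} = (Y¹_{0:t}, U¹_{0:t-1})` along the closed loop. -/
def lpTraj (S : Sys X U1 U2 W V1 V2 Y1 Y2) (g : Strat U1 U2 Y1 Y2) (ρ : Prim X W V1 V2)
    (t : ℕ) : Lp Y1 U1 t :=
  (fun s => S.h1 s ((hist S g ρ t).1 s) (ρ.v1 s), fun s => ((hist S g ρ t).2 s).1)

/-- `M²_t = (Y²_{0:t}, U²_{0:t-1})` along the closed loop. -/
def m2Traj (S : Sys X U1 U2 W V1 V2 Y1 Y2) (g : Strat U1 U2 Y1 Y2) (ρ : Prim X W V1 V2)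
    (t : ℕ) : M2 Y2 U2 t :=
  (fun s => S.h2 s ((hist S g ρ t).1 s) (ρ.v2 s), fun s => ((hist S g ρ t).2 s).2)

/-- `M¹_t` along the closed loop. -/
def m1Traj (S : Sys X U1 U2 W V1 V2 Y1 Y2) (g : Strat U1 U2 Y1 Y2) (ρ : Prim X W V1 V2)
    (t : ℕ) : M1 Y1 Y2 U1 U2 t := (lpTraj S g ρ t, m2Traj S g ρ t)

/-- Action `U¹_t` along the closed loop. -/
def u1Traj (S : Sys X U1 U2 W V1 V2 Y1 Y2) (g : Strat U1 U2 Y1 Y2) (ρ : Prim X W V1 V2)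
    (t : ℕ) : U1 t := g.g1 t (m1Traj S g ρ t)

/-- Action `U²_t` along the closed loop. -/
def u2Traj (S : Sys X U1 U2 W V1 V2 Y1 Y2) (g : Strat U1 U2 Y1 Y2) (ρ : Prim X W V1 V2)
    (t : ℕ) : U2 t := g.g2 t (m2Traj S g ρ t)

/-- Observation `Y¹_t` along the closed loop. -/
def y1Traj (S : Sys X U1 U2 W V1 V2 Y1 Y2) (g : Strat U1 U2 Y1 Y2) (ρ : Prim X W V1 V2)
    (t : ℕ) : Y1 t := S.h1 t (xTraj S g ρ t) (ρ.v1 t)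

/-- Observation `Y²_t` along the closed loop. -/
def y2Traj (S : Sys X U1 U2 W V1 V2 Y1 Y2) (g : Strat U1 U2 Y1 Y2) (ρ : Prim X W V1 V2)
    (t : ℕ) : Y2 t := S.h2 t (xTraj S g ρ t) (ρ.v2 t)

/-- New information `Z¹_{t+1} = (Y¹_{t+1}, U¹_t, Y²_{t+1}, U²_t)` of agent 1. -/
def z1Traj (S : Sys X U1 U2 W V1 V2 Y1 Y2) (g : Strat U1 U2 Y1 Y2) (ρ : Prim X W V1 V2)
    (t : ℕ) : Y1 (t + 1) × U1 t × Y2 (t + 1) × U2 t :=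
  (y1Traj S g ρ (t + 1), u1Traj S g ρ t, y2Traj S g ρ (t + 1), u2Traj S g ρ t)

/-- New information `Z²_{t+1} = (Y²_{t+1}, U²_t)` of agent 2. -/
def z2Traj (S : Sys X U1 U2 W V1 V2 Y1 Y2) (g : Strat U1 U2 Y1 Y2) (ρ : Prim X W V1 V2)
    (t : ℕ) : Y2 (t + 1) × U2 t := (y2Traj S g ρ (t + 1), u2Traj S g ρ t)

/-- Sample space of primitive random variables for horizon `T`. -/
abbrev ΩT (X W V1 V2 : ℕ → Type) (T : ℕ) : Type :=
  X 0 × ((t : Fin (T + 1)) → W t) × ((t : Fin (T + 1)) → V1 t) × ((t : Fin (T + 1)) → V2 t)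

/-- Extend a finite-horizon family to all times (by junk beyond the horizon). -/
def ext {α : ℕ → Type} [∀ t, Inhabited (α t)] (T : ℕ) (a : (t : Fin (T + 1)) → α t)
    (t : ℕ) : α t := if h : t < T + 1 then a ⟨t, h⟩ else default

/-- The primitive realization corresponding to a sample point. -/
def toPrim [∀ t, Inhabited (W t)] [∀ t, Inhabited (V1 t)] [∀ t, Inhabited (V2 t)]
    (T : ℕ) (ω : ΩT X W V1 V2 T) : Prim X W V1 V2 :=
  ⟨ω.1, ext T ω.2.1, ext T ω.2.2.1, ext T ω.2.2.2⟩

/-- The (known) probability mass functions of the mutually independent primitive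
random variables. -/
structure PrimPMF (X W V1 V2 : ℕ → Type) [Fintype (X 0)] [∀ t, Fintype (W t)]
    [∀ t, Fintype (V1 t)] [∀ t, Fintype (V2 t)] where
  pX0 : X 0 → ℝ
  pW : ∀ t, W t → ℝ
  pV1 : ∀ t, V1 t → ℝ
  pV2 : ∀ t, V2 t → ℝ
  pX0_nonneg : ∀ x, 0 ≤ pX0 x
  pX0_sum : ∑ x, pX0 x = 1
  pW_nonneg : ∀ t w, 0 ≤ pW t w
  pW_sum : ∀ t, ∑ w, pW t w = 1
  pV1_nonneg : ∀ t v, 0 ≤ pV1 t v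
  pV1_sum : ∀ t, ∑ v, pV1 t v = 1
  pV2_nonneg : ∀ t v, 0 ≤ pV2 t v
  pV2_sum : ∀ t, ∑ v, pV2 t v = 1

variable [Fintype (X 0)] [∀ t, Fintype (W t)] [∀ t, Fintype (V1 t)] [∀ t, Fintype (V2 t)]
variable [∀ t, Inhabited (W t)] [∀ t, Inhabited (V1 t)] [∀ t, Inhabited (V2 t)]

/-- Product mass of a sample point (independent primitives). -/
def mass (P : PrimPMF X W V1 V2) (T : ℕ) (ω : ΩT X W V1 V2 T) : ℝ :=
  P.pX0 ω.1 * (∏ t : Fin (T + 1), P.pW t (ω.2.1 t)) *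
    (∏ t : Fin (T + 1), P.pV1 t (ω.2.2.1 t)) * (∏ t : Fin (T + 1), P.pV2 t (ω.2.2.2 t))

/-- Elementary conditional probability `P(A | B)` on a finite sample space. -/
def condProb {Ω : Type*} [Fintype Ω] (P : Ω → ℝ) (A B : Ω → Prop) : ℝ :=
  (∑ ω, if A ω ∧ B ω then P ω else 0) / (∑ ω, if B ω then P ω else 0)

/-- Elementary conditional expectation `E[F | B]` on a finite sample space. -/
def condExp {Ω : Type*} [Fintype Ω] (P : Ω → ℝ) (F : Ω → ℝ) (B : Ω → Prop) : ℝ :=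
  (∑ ω, if B ω then P ω * F ω else 0) / (∑ ω, if B ω then P ω else 0)

/-- Agent 1's information state `Π¹_t = P(X_t = · | M¹_t)` at the realization `ω`. -/
def infoState1 (S : Sys X U1 U2 W V1 V2 Y1 Y2) (g : Strat U1 U2 Y1 Y2)
    (P : PrimPMF X W V1 V2) (T : ℕ) (ω : ΩT X W V1 V2 T) (t : ℕ) : X t → ℝ :=
  fun x => condProb (mass P T)
    (fun ω' => xTraj S g (toPrim T ω') t = x)
    (fun ω' => m1Traj S g (toPrim T ω') t = m1Traj S g (toPrim T ω) t)

/-- Agent 2's information state `Π²_t = P((X_t, L_t^{[1,2]}) = · | M²_t)` at `ω`. -/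
def infoState2 (S : Sys X U1 U2 W V1 V2 Y1 Y2) (g : Strat U1 U2 Y1 Y2)
    (P : PrimPMF X W V1 V2) (T : ℕ) (ω : ΩT X W V1 V2 T) (t : ℕ) :
    X t × Lp Y1 U1 t → ℝ :=
  fun sl => condProb (mass P T)
    (fun ω' => (xTraj S g (toPrim T ω') t, lpTraj S g (toPrim T ω') t) = sl)
    (fun ω' => m2Traj S g (toPrim T ω') t = m2Traj S g (toPrim T ω) t)

/-- Per-stage cost along the closed loop. -/
def stageCost (S : Sys X U1 U2 W V1 V2 Y1 Y2) (g : Strat U1 U2 Y1 Y2) (ρ : Prim X W V1 V2)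
    (t : ℕ) : ℝ := S.c t (xTraj S g ρ t) (u1Traj S g ρ t) (u2Traj S g ρ t)

/-- Expected cost-to-go `𝒥_{t₀}(g) = E[Σ_{t=t₀}^T c_t(X_t,U¹_t,U²_t)]`. -/
def costToGo (S : Sys X U1 U2 W V1 V2 Y1 Y2) (g : Strat U1 U2 Y1 Y2)
    (P : PrimPMF X W V1 V2) (T t0 : ℕ) : ℝ :=
  ∑ ω : ΩT X W V1 V2 T, mass P T ω * ∑ t ∈ Finset.Icc t0 T, stageCost S g (toPrim T ω) t

/-- Expected total cost `𝒥(g) = E[Σ_{t=0}^T c_t(X_t,U¹_t,U²_t)]`. -/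
def totalCost (S : Sys X U1 U2 W V1 V2 Y1 Y2) (g : Strat U1 U2 Y1 Y2)
    (P : PrimPMF X W V1 V2) (T : ℕ) : ℝ := costToGo S g P T 0

/-- `(g, ψ²)` is a compatible control/prescription pair: agent 1's action is
generated by the prescription `Γ_t^{[2,1]} = ψ_t(M²_t)` applied to `Π¹_t`. -/
def Compat (S : Sys X U1 U2 W V1 V2 Y1 Y2) (g : Strat U1 U2 Y1 Y2)
    (ψ : ∀ t, M2 Y2 U2 t → (X t → ℝ) → U1 t) (P : PrimPMF X W V1 V2) (T : ℕ) : Prop :=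
  ∀ t, t ≤ T → ∀ ω : ΩT X W V1 V2 T, 0 < mass P T ω →
    u1Traj S g (toPrim T ω) t =
      ψ t (m2Traj S g (toPrim T ω) t) (infoState1 S g P T ω t)

/-- The map `e_t` of Lemma 4: conditioning a joint distribution on
`𝒳_t × 𝓛_t^{[1,2]}` on its second component. -/
def eMap [∀ t, Fintype (X t)] (t : ℕ) (π2 : X t × Lp Y1 U1 t → ℝ) (l : Lp Y1 U1 t) :
    X t → ℝ := fun x => π2 (x, l) / ∑ x', π2 (x', l)

variable [∀ t, Fintype (X t)] [∀ t, Fintype (U1 t)] [∀ t, Fintype (U2 t)]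
variable [∀ t, Fintype (Y1 t)] [∀ t, Fintype (Y2 t)]

/-- One step of the system seen from agent 2: from `(X_t, L_t^{[1,2]})`, the
information state `π²`, a prescription `γ`, the action `u²`, and the primitive
variables, compute `((X_{t+1}, L_{t+1}^{[1,2]}), Z²_{t+1})`; agent 1's action is
`u¹ = γ(e_t(π², L_t^{[1,2]}))` (Lemma 4). -/
def stepS (S : Sys X U1 U2 W V1 V2 Y1 Y2) (t : ℕ) (π2 : X t × Lp Y1 U1 t → ℝ)
    (γ : (X t → ℝ) → U1 t) (u2 : U2 t) (sl : X t × Lp Y1 U1 t) (w : W t)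
    (v1 : V1 (t + 1)) (v2 : V2 (t + 1)) :
    (X (t + 1) × Lp Y1 U1 (t + 1)) × (Y2 (t + 1) × U2 t) :=
  let u1 := γ (eMap t π2 sl.2)
  let x' := S.f t sl.1 u1 u2 w
  ((x', (Fin.snoc (α := fun s : Fin (t + 2) => Y1 s) sl.2.1 (S.h1 (t + 1) x' v1),
         Fin.snoc (α := fun s : Fin (t + 1) => U1 s) sl.2.2 u1)),
   (S.h2 (t + 1) x' v2, u2))

/-- The (strategy-independent) likelihood `P(Z²_{t+1} = z | π², γ, u²)`. -/
def lik (S : Sys X U1 U2 W V1 V2 Y1 Y2) (P : PrimPMF X W V1 V2) (t : ℕ)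
    (π2 : X t × Lp Y1 U1 t → ℝ) (γ : (X t → ℝ) → U1 t) (u2 : U2 t)
    (z : Y2 (t + 1) × U2 t) : ℝ :=
  ∑ sl : X t × Lp Y1 U1 t, ∑ w : W t, ∑ v1 : V1 (t + 1), ∑ v2 : V2 (t + 1),
    if (stepS S t π2 γ u2 sl w v1 v2).2 = z then
      P.pW t w * P.pV1 (t + 1) v1 * P.pV2 (t + 1) v2 * π2 sl else 0

/-- The strategy-independent filter `f̃²_t` of Lemma 5 (Bayes update of `Π²`). -/
def ftilE (S : Sys X U1 U2 W V1 V2 Y1 Y2) (P : PrimPMF X W V1 V2) (t : ℕ)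
    (π2 : X t × Lp Y1 U1 t → ℝ) (γ : (X t → ℝ) → U1 t) (u2 : U2 t)
    (z : Y2 (t + 1) × U2 t) : X (t + 1) × Lp Y1 U1 (t + 1) → ℝ :=
  fun sl' =>
    (∑ sl : X t × Lp Y1 U1 t, ∑ w : W t, ∑ v1 : V1 (t + 1), ∑ v2 : V2 (t + 1),
      if stepS S t π2 γ u2 sl w v1 v2 = (sl', z) then
        P.pW t w * P.pV1 (t + 1) v1 * P.pV2 (t + 1) v2 * π2 sl else 0) /
      lik S P t π2 γ u2 z

/-- The function `c̃²_t` of Lemma 7: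
`c̃²_t(π², γ, u²) = E[c_t(X_t, Γ_t^{[2,1]}(Π¹_t), u²) | Π²_t = π²]`. -/
def ctilE (S : Sys X U1 U2 W V1 V2 Y1 Y2) (t : ℕ) (π2 : X t × Lp Y1 U1 t → ℝ)
    (γ : (X t → ℝ) → U1 t) (u2 : U2 t) : ℝ :=
  ∑ sl : X t × Lp Y1 U1 t, S.c t sl.1 (γ (eMap t π2 sl.2)) u2 * π2 sl

/-- The value functions of the dynamic program: for `t < T`,
`J_t(π²) = inf_{u², γ} [ c̃²_t(π², γ, u²) + E[J_{t+1}(Π²_{t+1}) | π², γ, u²] ]`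
(the conditional expectation being the strategy-independent expression given by
Lemmas 5 and 7), with the boundary condition `J_T = J²_T`, the two-sub-step
terminal value function
`J²_T(π²) = inf_{u²} Σ_l (Σ_x π²(x,l)) · inf_{u¹} Σ_x c_T(x,u¹,u²)·e_T(π²,l)(x)`. -/
def Jval (S : Sys X U1 U2 W V1 V2 Y1 Y2) (P : PrimPMF X W V1 V2) (T t : ℕ) :
    (X t × Lp Y1 U1 t → ℝ) → ℝ :=
  if h : T ≤ t then
    fun π2 => ⨅ u2 : U2 t, ∑ l : Lp Y1 U1 t, (∑ x, π2 (x, l)) *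
      ⨅ u1 : U1 t, ∑ x, S.c t x u1 u2 * eMap t π2 l x
  else
    fun π2 => ⨅ u2 : U2 t, ⨅ γ : (X t → ℝ) → U1 t,
      ctilE S t π2 γ u2 +
        ∑ z : Y2 (t + 1) × U2 t,
          lik S P t π2 γ u2 z * Jval S P T (t + 1) (ftilE S P t π2 γ u2 z)
termination_by T + 1 - t
decreasing_by omega

/-!
Given `M²`, the action of agent 1 depends on its memory only through `Π¹ = e(Π², L)`, and
the primitive noise of a stage is independent of `(X, L, M²)` (resampling it changes neither the
law nor the past). Hence `Π²` is a controlled Markov chain driven by the Bayes filter `f̃²`, and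
conditioning on `M²_s` and telescoping give the performance-difference identity
`𝒥_t(g) - E[J_t(Π²_t)] = ∑ s ∈ [t, T], E[Q_s(Π²_s, Γ_s, U²_s) - J_s(Π²_s)]`, where `Q_s` is the
bracket minimized at stage `s`. Every summand is nonnegative, and all of them vanish for argmin
laws. The minima are attained although prescriptions range over an infinite set: `Q_s(π², γ, u²)`
sees `γ` only at the finitely many distributions `e(π², l)`.
-/

section FiniteProbability

variable {Ω α β ν : Type*} [Fintype Ω] {μ : Ω → ℝ}

theorem condProb_eq_condExp (A B : Ω → Prop) :
    condProb μ A B = condExp μ (fun ω => if A ω then 1 else 0) B := by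
  unfold condProb condExp
  congr 1
  refine sum_congr rfl fun ω _ => ?_
  by_cases hA : A ω <;> by_cases hB : B ω <;> simp [hA, hB]

theorem condExp_congr {F F' : Ω → ℝ} {B : Ω → Prop} (h : ∀ ω, μ ω ≠ 0 → B ω → F ω = F' ω) :
    condExp μ F B = condExp μ F' B := by
  unfold condExp
  congr! 3 with ω _ hB
  by_cases hω : μ ω = 0
  · simp only [hω, zero_mul]
  · rw [h ω hω hB]

theorem condProb_nonneg (hμ : ∀ ω, 0 ≤ μ ω) (A B : Ω → Prop) : 0 ≤ condProb μ A B := by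
  unfold condProb
  exact div_nonneg (sum_nonneg fun ω _ => ite_nonneg (hμ ω) le_rfl)
    (sum_nonneg fun ω _ => ite_nonneg (hμ ω) le_rfl)

theorem condExp_add (F G : Ω → ℝ) (B : Ω → Prop) :
    condExp μ (fun ω => F ω + G ω) B = condExp μ F B + condExp μ G B := by
  unfold condExp
  rw [← add_div, ← sum_add_distrib]
  congr! 2 with ω
  split_ifs <;> ring

theorem condExp_comp [Fintype α] (Y : Ω → α) (K : α → ℝ) (B : Ω → Prop) :
    condExp μ (fun ω => K (Y ω)) B = ∑ y, condProb μ (fun ω => Y ω = y) B * K y := by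
  unfold condExp condProb
  simp only [div_mul_eq_mul_div, ← sum_div, sum_mul]
  rw [sum_comm]
  congr! 2 with ω
  by_cases hB : B ω <;> simp [hB]

theorem sum_condProb_eq_and [Fintype α] (Y : Ω → α) (A B : Ω → Prop) :
    ∑ y, condProb μ (fun ω => Y ω = y ∧ A ω) B = condProb μ A B := by
  unfold condProb
  rw [← sum_div, sum_comm]
  congr! 2 with ω
  by_cases hA : A ω <;> by_cases hB : B ω <;> simp [hA, hB]

theorem sum_ite_pos (hμ : ∀ ω, 0 ≤ μ ω) {B : Ω → Prop} [DecidablePred B] {ω₀ : Ω}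
    (hω₀ : 0 < μ ω₀) (hB : B ω₀) : 0 < ∑ ω, if B ω then μ ω else 0 :=
  sum_pos' (fun ω _ => ite_nonneg (hμ ω) le_rfl) ⟨ω₀, mem_univ _, by rwa [if_pos hB]⟩

theorem condProb_and_right (hμ : ∀ ω, 0 ≤ μ ω) (A C : Ω → Prop) {B : Ω → Prop} {ω₀ : Ω}
    (hω₀ : 0 < μ ω₀) (hB : B ω₀) :
    condProb μ A (fun ω => C ω ∧ B ω) = condProb μ (fun ω => A ω ∧ C ω) B / condProb μ C B := by
  unfold condProb
  rw [div_div_div_cancel_right₀ (sum_ite_pos hμ hω₀ hB).ne']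
  simp only [and_assoc]
  congr!

theorem sum_mul_condExp (hμ : ∀ ω, 0 ≤ μ ω) (M : Ω → β) (F : Ω → ℝ) :
    ∑ ω, μ ω * condExp μ F (fun ω' => M ω' = M ω) = ∑ ω, μ ω * F ω := by
  have fiber_pos {ω : Ω} (hω : μ ω ≠ 0) : 0 < ∑ ω', if M ω' = M ω then μ ω' else 0 :=
    sum_ite_pos hμ ((hμ ω).lt_of_ne' hω) rfl
  calc
    _ = ∑ ω, ∑ ω', if M ω = M ω' then
          μ ω * (μ ω' * F ω' / ∑ ω'', if M ω'' = M ω' then μ ω'' else 0) else 0 := by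
      refine sum_congr rfl fun ω _ => ?_
      unfold condExp
      rw [sum_div, mul_sum]
      refine sum_congr rfl fun ω' _ => ?_
      by_cases h : M ω' = M ω
      · simp only [h, if_true]
      · simp only [h, Ne.symm h, if_false, zero_div, mul_zero]
    _ = ∑ ω', (∑ ω, if M ω = M ω' then μ ω else 0) *
          (μ ω' * F ω' / ∑ ω'', if M ω'' = M ω' then μ ω'' else 0) := by
      rw [sum_comm]
      simp only [sum_mul, ite_mul, zero_mul]
    _ = ∑ ω', μ ω' * F ω' := by
      refine sum_congr rfl fun ω' _ => ?_
      by_cases hω' : μ ω' = 0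
      · simp only [hω', zero_mul, zero_div, mul_zero]
      · exact mul_div_cancel₀ _ (fiber_pos hω').ne'

/-- Under `μ`, the random variable `N` has mass function `q` and is independent of `Y`, expressed
by integrating `N` out of an arbitrary function of `Y` and `N`. -/
def IndepWithLaw [Fintype ν] (μ : Ω → ℝ) (Y : Ω → α) (N : Ω → ν) (q : ν → ℝ) : Prop :=
  ∀ F : α → ν → ℝ, ∑ ω, μ ω * F (Y ω) (N ω) = ∑ ω, μ ω * ∑ n, q n * F (Y ω) n

/- Exchanging a fresh sample `n` with `N ω` is an involution of `Ω × ν` preserving the product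
weight. -/
theorem indepWithLaw_of_resample [Fintype ν] {Y : Ω → α} {N : Ω → ν} {q : ν → ℝ}
    (hq : ∑ n, q n = 1) (up : Ω → ν → Ω) (N_up : ∀ ω n, N (up ω n) = n)
    (up_up : ∀ ω n, up (up ω n) (N ω) = ω) (μ_up : ∀ ω n, μ (up ω n) * q (N ω) = μ ω * q n)
    (Y_up : ∀ ω n, Y (up ω n) = Y ω) : IndepWithLaw μ Y N q := by
  intro F
  have swap : ∑ p : Ω × ν, μ p.1 * q p.2 * F (Y p.1) (N p.1) =
      ∑ p : Ω × ν, μ p.1 * q p.2 * F (Y p.1) p.2 := by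
    let σ : Ω × ν → Ω × ν := fun p => (up p.1 p.2, N p.1)
    have σσ (p : Ω × ν) : σ (σ p) = p := by simp only [σ, N_up, up_up]
    refine sum_nbij' σ σ (by simp) (by simp) (fun p _ => σσ p) (fun p _ => σσ p) fun p _ => ?_
    simp only [σ, μ_up, Y_up]
  rw [Fintype.sum_prod_type, Fintype.sum_prod_type] at swap
  calc
    _ = ∑ ω, ∑ n, μ ω * q n * F (Y ω) (N ω) := by simp only [← sum_mul, ← mul_sum, hq, mul_one]
    _ = ∑ ω, μ ω * ∑ n, q n * F (Y ω) n := by simp only [mul_sum, ← mul_assoc, ← swap]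

theorem IndepWithLaw.condExp_comp [Fintype ν] [Fintype α] {M : Ω → β} {Y : Ω → α} {N : Ω → ν}
    {q : ν → ℝ} (h : IndepWithLaw μ (fun ω => (M ω, Y ω)) N q) (K : α → ν → ℝ) (m : β) :
    condExp μ (fun ω => K (Y ω) (N ω)) (fun ω => M ω = m) =
      ∑ y, condProb μ (fun ω => Y ω = y) (fun ω => M ω = m) * ∑ n, q n * K y n := by
  rw [← NestedTeam.condExp_comp Y (fun y => ∑ n, q n * K y n)]
  unfold condExp
  congr 1
  have := h fun p n => if p.1 = m then K p.2 n else 0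
  simpa only [mul_ite, mul_zero, sum_ite_irrel, sum_const_zero] using this

end FiniteProbability

section Trajectories

theorem snoc_map {n : ℕ} {α β : Fin (n + 1) → Type*} (F : ∀ i, α i → β i)
    (x : ∀ i : Fin n, α i.castSucc) (a : α (Fin.last n)) :
    (fun i => F i (Fin.snoc x a i)) =
      Fin.snoc (fun i : Fin n => F i.castSucc (x i)) (F (Fin.last n) a) := by
  funext i
  cases i using Fin.lastCases with
  | last => rw [Fin.snoc_last, Fin.snoc_last]
  | cast i => rw [Fin.snoc_castSucc, Fin.snoc_castSucc]

variable {X U1 U2 W V1 V2 Y1 Y2 : ℕ → Type} (S : Sys X U1 U2 W V1 V2 Y1 Y2)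
  (g : Strat U1 U2 Y1 Y2) (ρ : Prim X W V1 V2) (t : ℕ)

variable {g ρ t} in
theorem hist_congr {g' : Strat U1 U2 Y1 Y2} {ρ' : Prim X W V1 V2}
    (hg : ∀ s, s < t → g.g1 s = g'.g1 s ∧ g.g2 s = g'.g2 s) (hx0 : ρ.x0 = ρ'.x0)
    (hw : ∀ s, s < t → ρ.w s = ρ'.w s) (hv1 : ∀ s, s < t → ρ.v1 s = ρ'.v1 s)
    (hv2 : ∀ s, s < t → ρ.v2 s = ρ'.v2 s) : hist S g ρ t = hist S g' ρ' t := by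
  induction t with
  | zero => simp only [hist, hx0]
  | succ t ih =>
    have hist_t := ih (fun s hs => hg s (by omega)) (fun s hs => hw s (by omega))
      (fun s hs => hv1 s (by omega)) (fun s hs => hv2 s (by omega))
    have v1_eq (s : Fin (t + 1)) : ρ.v1 s = ρ'.v1 s := hv1 s s.2
    have v2_eq (s : Fin (t + 1)) : ρ.v2 s = ρ'.v2 s := hv2 s s.2
    simp only [hist, hist_t, v1_eq, v2_eq, hw t t.lt_succ_self, hg t t.lt_succ_self]

variable {g ρ t} in
theorem traj_congr {g' : Strat U1 U2 Y1 Y2} {ρ' : Prim X W V1 V2}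
    (hg : ∀ s, s < t → g.g1 s = g'.g1 s ∧ g.g2 s = g'.g2 s) (hx0 : ρ.x0 = ρ'.x0)
    (hw : ∀ s, s < t → ρ.w s = ρ'.w s) (hv1 : ∀ s, s ≤ t → ρ.v1 s = ρ'.v1 s)
    (hv2 : ∀ s, s ≤ t → ρ.v2 s = ρ'.v2 s) :
    xTraj S g ρ t = xTraj S g' ρ' t ∧ m1Traj S g ρ t = m1Traj S g' ρ' t := by
  have hist_t := hist_congr S hg hx0 hw (fun s hs => hv1 s hs.le) (fun s hs => hv2 s hs.le)
  have v1_eq (s : Fin (t + 1)) : ρ.v1 s = ρ'.v1 s := hv1 s (by omega)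
  have v2_eq (s : Fin (t + 1)) : ρ.v2 s = ρ'.v2 s := hv2 s (by omega)
  simp only [xTraj, m1Traj, lpTraj, m2Traj, hist_t, v1_eq, v2_eq, and_self]

theorem xTraj_succ : xTraj S g ρ (t + 1) =
    S.f t (xTraj S g ρ t) (u1Traj S g ρ t) (u2Traj S g ρ t) (ρ.w t) :=
  Fin.snoc_last (α := fun s : Fin (t + 2) => X s) _ _

theorem lpTraj_succ : lpTraj S g ρ (t + 1) =
    (Fin.snoc (α := fun s : Fin (t + 2) => Y1 s) (lpTraj S g ρ t).1 (y1Traj S g ρ (t + 1)),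
      Fin.snoc (α := fun s : Fin (t + 1) => U1 s) (lpTraj S g ρ t).2 (u1Traj S g ρ t)) := by
  rw [y1Traj, xTraj_succ]
  exact Prod.ext
    (snoc_map (α := fun s : Fin (t + 2) => X s) (fun s x => S.h1 s x (ρ.v1 s)) _ _)
    (snoc_map (α := fun s : Fin (t + 1) => U1 s × U2 s) (fun _ => Prod.fst) _ _)

theorem m2Traj_succ : m2Traj S g ρ (t + 1) =
    (Fin.snoc (α := fun s : Fin (t + 2) => Y2 s) (m2Traj S g ρ t).1 (y2Traj S g ρ (t + 1)),
      Fin.snoc (α := fun s : Fin (t + 1) => U2 s) (m2Traj S g ρ t).2 (u2Traj S g ρ t)) := by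
  rw [y2Traj, xTraj_succ]
  exact Prod.ext
    (snoc_map (α := fun s : Fin (t + 2) => X s) (fun s x => S.h2 s x (ρ.v2 s)) _ _)
    (snoc_map (α := fun s : Fin (t + 1) => U1 s × U2 s) (fun _ => Prod.snd) _ _)

theorem m2Traj_succ_eq_iff (ρ' : Prim X W V1 V2) :
    m2Traj S g ρ (t + 1) = m2Traj S g ρ' (t + 1) ↔
      z2Traj S g ρ t = z2Traj S g ρ' t ∧ m2Traj S g ρ t = m2Traj S g ρ' t := by
  rw [m2Traj_succ, m2Traj_succ, z2Traj, z2Traj, Prod.mk.injEq, Prod.mk.injEq,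
    Prod.ext_iff (x := m2Traj S g ρ t)]
  have snoc_y2 := Fin.snoc_inj (α := fun s : Fin (t + 2) => Y2 s) (x := (m2Traj S g ρ t).1)
    (y := (m2Traj S g ρ' t).1) (xₙ := y2Traj S g ρ (t + 1)) (yₙ := y2Traj S g ρ' (t + 1))
  have snoc_u2 := Fin.snoc_inj (α := fun s : Fin (t + 1) => U2 s) (x := (m2Traj S g ρ t).2)
    (y := (m2Traj S g ρ' t).2) (xₙ := u2Traj S g ρ t) (yₙ := u2Traj S g ρ' t)
  tauto

end Trajectories

section PrimitiveNoise

theorem prod_update_mul {ι M : Type*} [Fintype ι] [DecidableEq ι] [CommMonoid M] {α : ι → Type*}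
    (p : ∀ i, α i → M) (x : ∀ i, α i) (i : ι) (a : α i) :
    (∏ j, p j (Function.update x i a j)) * p i (x i) = (∏ j, p j (x j)) * p i a := by
  rw [Fintype.prod_eq_mul_prod_compl i, Fintype.prod_eq_mul_prod_compl i fun j => p j (x j),
    Function.update_self]
  have off_i : ∏ j ∈ {i}ᶜ, p j (Function.update x i a j) = ∏ j ∈ {i}ᶜ, p j (x j) :=
    prod_congr rfl fun j hj => by rw [Function.update_of_ne (by simpa using hj)]
  rw [off_i]
  ac_rfl

section Extension

variable {α : ℕ → Type} [∀ t, Inhabited (α t)] {T t : ℕ}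

theorem ext_of_le (a : (t : Fin (T + 1)) → α t) (ht : t ≤ T) :
    ext T a t = a ⟨t, Nat.lt_succ_of_le ht⟩ :=
  dif_pos _

theorem ext_update (a : (t : Fin (T + 1)) → α t) (ht : t ≤ T) (b : α t) :
    ext T (Function.update a ⟨t, Nat.lt_succ_of_le ht⟩ b) = Function.update (ext T a) t b := by
  funext s
  by_cases hst : s = t
  · subst hst
    rw [ext_of_le _ ht, Function.update_self, Function.update_self]
  · rw [Function.update_of_ne hst]
    unfold ext
    exact dite_congr rfl
      (fun _ => Function.update_of_ne (by simpa only [Ne, Fin.mk.injEq] using hst) _ _) fun _ => rfl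

end Extension

variable {X W V1 V2 : ℕ → Type}

/-- The primitive variables `(W_t, V¹_{t+1}, V²_{t+1})` driving the transition from time `t` to
time `t + 1`. -/
def stageNoise (ρ : Prim X W V1 V2) (t : ℕ) : W t × V1 (t + 1) × V2 (t + 1) :=
  (ρ.w t, ρ.v1 (t + 1), ρ.v2 (t + 1))

/-- The sample point `ω` with the noise of the transition from time `t` to time `t + 1` replaced
by `n`. -/
def resampleNoise {T t : ℕ} (ht : t < T) (ω : ΩT X W V1 V2 T)
    (n : W t × V1 (t + 1) × V2 (t + 1)) : ΩT X W V1 V2 T :=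
  (ω.1, Function.update ω.2.1 ⟨t, Nat.lt_succ_of_le ht.le⟩ n.1,
    Function.update ω.2.2.1 ⟨t + 1, Nat.lt_succ_of_le ht⟩ n.2.1,
    Function.update ω.2.2.2 ⟨t + 1, Nat.lt_succ_of_le ht⟩ n.2.2)

section ProductMass

variable [Fintype (X 0)] [∀ t, Fintype (W t)] [∀ t, Fintype (V1 t)] [∀ t, Fintype (V2 t)]
  (P : PrimPMF X W V1 V2)

theorem mass_nonneg {T : ℕ} (ω : ΩT X W V1 V2 T) : 0 ≤ mass P T ω :=
  mul_nonneg (mul_nonneg (mul_nonneg (P.pX0_nonneg _) (prod_nonneg fun t _ => P.pW_nonneg t _))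
    (prod_nonneg fun t _ => P.pV1_nonneg t _)) (prod_nonneg fun t _ => P.pV2_nonneg t _)

/-- The mass function of `stageNoise`. -/
def stageNoisePMF (t : ℕ) (n : W t × V1 (t + 1) × V2 (t + 1)) : ℝ :=
  P.pW t n.1 * P.pV1 (t + 1) n.2.1 * P.pV2 (t + 1) n.2.2

theorem sum_stageNoisePMF (t : ℕ) : ∑ n, stageNoisePMF P t n = 1 := by
  simp only [Fintype.sum_prod_type, stageNoisePMF, ← mul_sum, P.pV2_sum, mul_one, P.pV1_sum,
    P.pW_sum]

end ProductMass

variable [∀ t, Inhabited (W t)] [∀ t, Inhabited (V1 t)] [∀ t, Inhabited (V2 t)]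
  {T t : ℕ} (ht : t < T)

theorem stageNoise_toPrim (ω : ΩT X W V1 V2 T) : stageNoise (toPrim T ω) t =
    (ω.2.1 ⟨t, Nat.lt_succ_of_le ht.le⟩, ω.2.2.1 ⟨t + 1, Nat.lt_succ_of_le ht⟩,
      ω.2.2.2 ⟨t + 1, Nat.lt_succ_of_le ht⟩) := by
  simp only [stageNoise, toPrim, ext_of_le _ ht.le, ext_of_le _ (Nat.succ_le_of_lt ht)]

theorem toPrim_resampleNoise (ω : ΩT X W V1 V2 T) (n : W t × V1 (t + 1) × V2 (t + 1)) :
    toPrim T (resampleNoise ht ω n) =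
      ⟨ω.1, Function.update (ext T ω.2.1) t n.1, Function.update (ext T ω.2.2.1) (t + 1) n.2.1,
        Function.update (ext T ω.2.2.2) (t + 1) n.2.2⟩ := by
  rw [toPrim, resampleNoise, ext_update _ ht.le, ext_update _ ht, ext_update _ ht]

variable [Fintype (X 0)] [∀ t, Fintype (W t)] [∀ t, Fintype (V1 t)] [∀ t, Fintype (V2 t)]
  (P : PrimPMF X W V1 V2)

theorem mass_resampleNoise (ω : ΩT X W V1 V2 T) (n : W t × V1 (t + 1) × V2 (t + 1)) :
    mass P T (resampleNoise ht ω n) * stageNoisePMF P t (stageNoise (toPrim T ω) t) =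
      mass P T ω * stageNoisePMF P t n := by
  have hw := prod_update_mul (fun s : Fin (T + 1) => P.pW s) ω.2.1
    ⟨t, Nat.lt_succ_of_le ht.le⟩ n.1
  have hv1 := prod_update_mul (fun s : Fin (T + 1) => P.pV1 s) ω.2.2.1
    ⟨t + 1, Nat.lt_succ_of_le ht⟩ n.2.1
  have hv2 := prod_update_mul (fun s : Fin (T + 1) => P.pV2 s) ω.2.2.2
    ⟨t + 1, Nat.lt_succ_of_le ht⟩ n.2.2
  rw [stageNoise_toPrim ht]
  have := congrArg₂ (· * ·) (congrArg₂ (· * ·) hw hv1) hv2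
  simp only [mass, stageNoisePMF, resampleNoise] at this ⊢
  linear_combination P.pX0 ω.1 * this

include ht in
theorem indepWithLaw_stageNoise {U1 U2 Y1 Y2 : ℕ → Type} (S : Sys X U1 U2 W V1 V2 Y1 Y2)
    (g : Strat U1 U2 Y1 Y2) :
    IndepWithLaw (mass P T)
      (fun ω => (m2Traj S g (toPrim T ω) t, (xTraj S g (toPrim T ω) t, lpTraj S g (toPrim T ω) t)))
      (fun ω => stageNoise (toPrim T ω) t) (stageNoisePMF P t) := by
  refine indepWithLaw_of_resample (sum_stageNoisePMF P t) (resampleNoise ht) (fun ω n => ?_)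
    (fun ω n => ?_) (mass_resampleNoise ht P) (fun ω n => ?_)
  · simp only [toPrim_resampleNoise, stageNoise, Function.update_self]
  · simp only [stageNoise_toPrim ht, resampleNoise, Function.update_idem, Function.update_eq_self]
  · obtain ⟨x_eq, m1_eq⟩ : xTraj S g (toPrim T (resampleNoise ht ω n)) t =
          xTraj S g (toPrim T ω) t ∧
        m1Traj S g (toPrim T (resampleNoise ht ω n)) t = m1Traj S g (toPrim T ω) t := by
      rw [toPrim_resampleNoise]
      exact traj_congr S (fun _ _ => ⟨rfl, rfl⟩) rfl
        (fun s hs => Function.update_of_ne (by omega) _ _)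
        (fun s hs => Function.update_of_ne (by omega) _ _)
        (fun s hs => Function.update_of_ne (by omega) _ _)
    rw [m1Traj, m1Traj, Prod.mk.injEq] at m1_eq
    rw [x_eq, m1_eq.1, m1_eq.2]

end PrimitiveNoise

section InformationStates

variable {X U1 U2 W V1 V2 Y1 Y2 : ℕ → Type} [∀ t, Fintype (X t)] [∀ t, Fintype (W t)]
  [∀ t, Fintype (V1 t)] [∀ t, Fintype (V2 t)] [∀ t, Inhabited (W t)] [∀ t, Inhabited (V1 t)]
  [∀ t, Inhabited (V2 t)] (S : Sys X U1 U2 W V1 V2 Y1 Y2) (g : Strat U1 U2 Y1 Y2)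
  (P : PrimPMF X W V1 V2) (T t : ℕ)

/-- `Π¹_t` as a function of the memory of agent 1. -/
def infoState1At (m : M1 Y1 Y2 U1 U2 t) : X t → ℝ := fun x =>
  condProb (mass P T) (fun ω => xTraj S g (toPrim T ω) t = x)
    (fun ω => m1Traj S g (toPrim T ω) t = m)

/-- `Π²_t` as a function of the memory of agent 2. -/
def infoState2At (m : M2 Y2 U2 t) : X t × Lp Y1 U1 t → ℝ := fun sl =>
  condProb (mass P T) (fun ω => (xTraj S g (toPrim T ω) t, lpTraj S g (toPrim T ω) t) = sl)
    (fun ω => m2Traj S g (toPrim T ω) t = m)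

/-- The stage-`t` part of `Compat`: the prescription `ψ (M²_t)` applied to `Π¹_t` generates the
action of agent 1 almost surely. -/
def CompatAt (ψ : M2 Y2 U2 t → (X t → ℝ) → U1 t) : Prop :=
  ∀ ω : ΩT X W V1 V2 T, 0 < mass P T ω →
    u1Traj S g (toPrim T ω) t = ψ (m2Traj S g (toPrim T ω) t) (infoState1 S g P T ω t)

theorem infoState2At_nonneg (m : M2 Y2 U2 t) (sl : X t × Lp Y1 U1 t) :
    0 ≤ infoState2At S g P T t m sl :=
  condProb_nonneg (mass_nonneg P) _ _

variable {g t}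

theorem infoStateAt_congr {g' : Strat U1 U2 Y1 Y2}
    (hg : ∀ s, s < t → g.g1 s = g'.g1 s ∧ g.g2 s = g'.g2 s) :
    infoState1At S g P T t = infoState1At S g' P T t ∧
      infoState2At S g P T t = infoState2At S g' P T t := by
  have traj_eq (ω : ΩT X W V1 V2 T) := traj_congr S (ρ := toPrim T ω) hg rfl (fun _ _ => rfl)
    (fun _ _ => rfl) (fun _ _ => rfl)
  have x_eq (ω : ΩT X W V1 V2 T) := (traj_eq ω).1
  have m1_eq (ω : ΩT X W V1 V2 T) := (traj_eq ω).2
  have lp_eq (ω : ΩT X W V1 V2 T) := congrArg Prod.fst (m1_eq ω)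
  have m2_eq (ω : ΩT X W V1 V2 T) := congrArg Prod.snd (m1_eq ω)
  simp only [m1Traj] at lp_eq m2_eq
  exact ⟨by unfold infoState1At; simp only [x_eq, m1_eq],
    by unfold infoState2At; simp only [x_eq, lp_eq, m2_eq]⟩

theorem eMap_infoState2 {ω : ΩT X W V1 V2 T} (hω : 0 < mass P T ω) :
    eMap t (infoState2 S g P T ω t) (lpTraj S g (toPrim T ω) t) = infoState1 S g P T ω t := by
  funext x
  simp only [eMap, infoState2, infoState1, m1Traj, Prod.mk.injEq]
  rw [sum_condProb_eq_and,
    condProb_and_right (mass_nonneg P) (fun ω' => xTraj S g (toPrim T ω') t = x) _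
      (B := fun ω' => m2Traj S g (toPrim T ω') t = m2Traj S g (toPrim T ω) t) hω rfl]

section Filter

variable {S P T} {ψ : M2 Y2 U2 t → (X t → ℝ) → U1 t} (hψ : CompatAt S g P T t ψ)

include hψ

theorem CompatAt.stepS_eq {ω : ΩT X W V1 V2 T} (hω : 0 < mass P T ω) :
    stepS S t (infoState2 S g P T ω t) (ψ (m2Traj S g (toPrim T ω) t)) (u2Traj S g (toPrim T ω) t)
        (xTraj S g (toPrim T ω) t, lpTraj S g (toPrim T ω) t) ((toPrim T ω).w t)
        ((toPrim T ω).v1 (t + 1)) ((toPrim T ω).v2 (t + 1)) =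
      ((xTraj S g (toPrim T ω) (t + 1), lpTraj S g (toPrim T ω) (t + 1)),
        z2Traj S g (toPrim T ω) t) := by
  simp only [stepS, eMap_infoState2 S P T hω, ← hψ ω hω, lpTraj_succ, z2Traj, y1Traj, y2Traj,
    xTraj_succ]

variable [∀ t, Fintype (U1 t)] [∀ t, Fintype (Y1 t)]

theorem CompatAt.condExp_stageCost (m : M2 Y2 U2 t) :
    condExp (mass P T) (fun ω => stageCost S g (toPrim T ω) t)
        (fun ω => m2Traj S g (toPrim T ω) t = m) =
      ctilE S t (infoState2At S g P T t m) (ψ m) (g.g2 t m) := by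
  let cost (sl : X t × Lp Y1 U1 t) : ℝ :=
    S.c t sl.1 (ψ m (eMap t (infoState2At S g P T t m) sl.2)) (g.g2 t m)
  calc
    _ = condExp (mass P T)
          (fun ω => cost (xTraj S g (toPrim T ω) t, lpTraj S g (toPrim T ω) t))
          (fun ω => m2Traj S g (toPrim T ω) t = m) := by
      refine condExp_congr fun ω hω hm => ?_
      subst hm
      have hω := (mass_nonneg P ω).lt_of_ne' hω
      rw [stageCost, hψ ω hω, ← eMap_infoState2 S P T hω]
      rfl
    _ = ∑ sl, infoState2At S g P T t m sl * cost sl :=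
      condExp_comp (fun ω => (xTraj S g (toPrim T ω) t, lpTraj S g (toPrim T ω) t)) cost _
    _ = _ := sum_congr rfl fun sl _ => mul_comm _ _

theorem CompatAt.condProb_succ (ht : t < T) (m : M2 Y2 U2 t)
    (R : (X (t + 1) × Lp Y1 U1 (t + 1)) × (Y2 (t + 1) × U2 t) → Prop) [DecidablePred R] :
    condProb (mass P T)
        (fun ω => R ((xTraj S g (toPrim T ω) (t + 1), lpTraj S g (toPrim T ω) (t + 1)),
          z2Traj S g (toPrim T ω) t))
        (fun ω => m2Traj S g (toPrim T ω) t = m) =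
      ∑ sl : X t × Lp Y1 U1 t, ∑ w : W t, ∑ v1 : V1 (t + 1), ∑ v2 : V2 (t + 1),
        if R (stepS S t (infoState2At S g P T t m) (ψ m) (g.g2 t m) sl w v1 v2) then
          P.pW t w * P.pV1 (t + 1) v1 * P.pV2 (t + 1) v2 * infoState2At S g P T t m sl else 0 := by
  let K (sl : X t × Lp Y1 U1 t) (n : W t × V1 (t + 1) × V2 (t + 1)) : ℝ :=
    if R (stepS S t (infoState2At S g P T t m) (ψ m) (g.g2 t m) sl n.1 n.2.1 n.2.2) then 1 else 0
  calc
    _ = condExp (mass P T) (fun ω => K (xTraj S g (toPrim T ω) t, lpTraj S g (toPrim T ω) t)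
          (stageNoise (toPrim T ω) t)) (fun ω => m2Traj S g (toPrim T ω) t = m) := by
      rw [condProb_eq_condExp]
      refine condExp_congr fun ω hω hm => ?_
      subst hm
      rw [← hψ.stepS_eq ((mass_nonneg P ω).lt_of_ne' hω)]
      congr!
    _ = ∑ sl, infoState2At S g P T t m sl * ∑ n, stageNoisePMF P t n * K sl n :=
      (indepWithLaw_stageNoise ht P S g).condExp_comp K m
    _ = _ := by
      simp only [Fintype.sum_prod_type (α₁ := W t), Fintype.sum_prod_type (α₁ := V1 (t + 1)),
        mul_sum, K, mul_ite, mul_one, mul_zero, stageNoisePMF]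
      refine sum_congr rfl fun sl _ => sum_congr rfl fun w _ => sum_congr rfl fun v1 _ =>
        sum_congr rfl fun v2 _ => if_congr Iff.rfl (mul_comm _ _) rfl

theorem CompatAt.lik_eq_condProb (ht : t < T) (m : M2 Y2 U2 t) (z : Y2 (t + 1) × U2 t) :
    lik S P t (infoState2At S g P T t m) (ψ m) (g.g2 t m) z =
      condProb (mass P T) (fun ω => z2Traj S g (toPrim T ω) t = z)
        (fun ω => m2Traj S g (toPrim T ω) t = m) :=
  (hψ.condProb_succ ht m fun p => p.2 = z).symm

theorem CompatAt.infoState2_succ (ht : t < T) {ω : ΩT X W V1 V2 T} (hω : 0 < mass P T ω) :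
    infoState2 S g P T ω (t + 1) =
      ftilE S P t (infoState2 S g P T ω t) (ψ (m2Traj S g (toPrim T ω) t))
        (u2Traj S g (toPrim T ω) t) (z2Traj S g (toPrim T ω) t) := by
  funext sl
  have num := hψ.condProb_succ ht (m2Traj S g (toPrim T ω) t)
    fun p => p = (sl, z2Traj S g (toPrim T ω) t)
  have den := hψ.lik_eq_condProb ht (m2Traj S g (toPrim T ω) t) (z2Traj S g (toPrim T ω) t)
  simp only [Prod.mk_inj (b₁ := z2Traj S g _ t)] at num
  simp only [infoState2, m2Traj_succ_eq_iff]
  rw [condProb_and_right (mass_nonneg P) _ _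
    (B := fun ω' => m2Traj S g (toPrim T ω') t = m2Traj S g (toPrim T ω) t) hω rfl]
  exact congrArg₂ (· / ·) num den.symm

variable [∀ t, Fintype (U2 t)] [∀ t, Fintype (Y2 t)]

theorem CompatAt.condExp_infoState2_succ (ht : t < T)
    (V : (X (t + 1) × Lp Y1 U1 (t + 1) → ℝ) → ℝ) (m : M2 Y2 U2 t) :
    condExp (mass P T) (fun ω => V (infoState2 S g P T ω (t + 1)))
        (fun ω => m2Traj S g (toPrim T ω) t = m) =
      ∑ z, lik S P t (infoState2At S g P T t m) (ψ m) (g.g2 t m) z *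
        V (ftilE S P t (infoState2At S g P T t m) (ψ m) (g.g2 t m) z) := by
  simp only [hψ.lik_eq_condProb ht]
  rw [← condExp_comp (fun ω => z2Traj S g (toPrim T ω) t)
    fun z => V (ftilE S P t (infoState2At S g P T t m) (ψ m) (g.g2 t m) z)]
  refine condExp_congr fun ω hω hm => ?_
  subst hm
  rw [hψ.infoState2_succ ht ((mass_nonneg P ω).lt_of_ne' hω)]
  rfl

end Filter

end InformationStates

section DynamicProgram

variable {X U1 U2 W V1 V2 Y1 Y2 : ℕ → Type} [∀ t, Fintype (X t)] [∀ t, Fintype (U1 t)]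
  [∀ t, Fintype (Y1 t)] (S : Sys X U1 U2 W V1 V2 Y1 Y2) {t : ℕ} {π2 : X t × Lp Y1 U1 t → ℝ}

theorem ctilE_eq_sum_mul (hπ : ∀ sl, 0 ≤ π2 sl) (γ : (X t → ℝ) → U1 t) (u2 : U2 t) :
    ctilE S t π2 γ u2 = ∑ l, (∑ x, π2 (x, l)) *
      ∑ x, S.c t x (γ (eMap t π2 l)) u2 * eMap t π2 l x := by
  rw [ctilE, Fintype.sum_prod_type_right]
  refine sum_congr rfl fun l _ => ?_
  rw [mul_sum]
  refine sum_congr rfl fun x _ => ?_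
  rw [eMap, mul_left_comm]
  congr 1
  refine (mul_div_cancel_of_imp' fun h => ?_).symm
  exact (sum_eq_zero_iff_of_nonneg fun x _ => hπ (x, l)).1 h x (mem_univ x)

theorem iInf_ctilE [Nonempty (U1 t)] (hπ : ∀ sl, 0 ≤ π2 sl) (u2 : U2 t) :
    ⨅ γ, ctilE S t π2 γ u2 = ∑ l, (∑ x, π2 (x, l)) *
      ⨅ u1, ∑ x, S.c t x u1 u2 * eMap t π2 l x := by
  let cost (p : X t → ℝ) (u1 : U1 t) : ℝ := ∑ x, S.c t x u1 u2 * p x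
  have argmin (p : X t → ℝ) : ∃ u1, cost p u1 = ⨅ u1, cost p u1 := exists_eq_ciInf_of_finite
  choose γ hγ using argmin
  have lower (γ' : (X t → ℝ) → U1 t) : ∑ l, (∑ x, π2 (x, l)) * ⨅ u1, cost (eMap t π2 l) u1 ≤
      ctilE S t π2 γ' u2 := by
    rw [ctilE_eq_sum_mul S hπ]
    refine sum_le_sum fun l _ => mul_le_mul_of_nonneg_left ?_ (sum_nonneg fun x _ => hπ _)
    exact ciInf_le (Set.finite_range (cost (eMap t π2 l))).bddBelow _
  refine le_antisymm ((ciInf_le ⟨_, Set.forall_mem_range.2 lower⟩ γ).trans_eq ?_) (le_ciInf lower)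
  rw [ctilE_eq_sum_mul S hπ]
  exact sum_congr rfl fun l _ => congrArg _ (hγ _)

variable [∀ t, Fintype (W t)] [∀ t, Fintype (V1 t)] [∀ t, Fintype (V2 t)] [∀ t, Fintype (U2 t)]
  [∀ t, Fintype (Y2 t)] (P : PrimPMF X W V1 V2) (T : ℕ)

/-- The value function `J_t`, extended by `0` beyond the horizon `T`. -/
def stoppedVal (t : ℕ) (π2 : X t × Lp Y1 U1 t → ℝ) : ℝ :=
  if t ≤ T then Jval S P T t π2 else 0

/-- The bracket `Q_t(π², γ, u²) = c̃²_t(π², γ, u²) + E[J_{t+1}(Π²_{t+1}) | π², γ, u²]` minimized at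
stage `t` of the dynamic program, without successor term at the terminal stage. -/
def actionValue (t : ℕ) (π2 : X t × Lp Y1 U1 t → ℝ) (γ : (X t → ℝ) → U1 t) (u2 : U2 t) : ℝ :=
  ctilE S t π2 γ u2 +
    ∑ z, lik S P t π2 γ u2 z * stoppedVal S P T (t + 1) (ftilE S P t π2 γ u2 z)

theorem Jval_eq_iInf_actionValue [Nonempty (U1 t)] (hπ : ∀ sl, 0 ≤ π2 sl) :
    Jval S P T t π2 = ⨅ u2, ⨅ γ, actionValue S P T t π2 γ u2 := by
  rw [Jval]
  split_ifs with ht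
  · simp only [actionValue, stoppedVal, Nat.not_le.2 (Nat.lt_succ_of_le ht), if_false, mul_zero,
      sum_const_zero, add_zero, iInf_ctilE S hπ]
  · simp only [actionValue, stoppedVal, Nat.succ_le_of_lt (Nat.not_le.1 ht), if_true]

theorem actionValue_congr {γ γ' : (X t → ℝ) → U1 t}
    (h : ∀ l, γ (eMap t π2 l) = γ' (eMap t π2 l)) (u2 : U2 t) :
    actionValue S P T t π2 γ u2 = actionValue S P T t π2 γ' u2 := by
  have step_eq : stepS S t π2 γ u2 = stepS S t π2 γ' u2 := by
    funext sl w v1 v2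
    simp only [stepS, h]
  have lik_eq : lik S P t π2 γ u2 = lik S P t π2 γ' u2 := by
    unfold lik
    rw [step_eq]
  have filter_eq : ftilE S P t π2 γ u2 = ftilE S P t π2 γ' u2 := by
    unfold ftilE
    rw [step_eq, lik_eq]
  simp only [actionValue, ctilE, h, lik_eq, filter_eq]

variable (π2) in
theorem finite_range_actionValue (u2 : U2 t) :
    (Set.range fun γ => actionValue S P T t π2 γ u2).Finite := by
  obtain ⟨Q, hQ⟩ : ∃ Q : (Lp Y1 U1 t → U1 t) → ℝ, (fun γ => actionValue S P T t π2 γ u2) =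
      Q ∘ fun γ l => γ (eMap t π2 l) :=
    (Function.factorsThrough_iff _).1 fun γ γ' h => actionValue_congr S P T (congrFun h) u2
  rw [hQ]
  exact (Set.finite_range Q).subset (Set.range_comp_subset_range _ Q)

theorem Jval_le_actionValue (hπ : ∀ sl, 0 ≤ π2 sl) (γ : (X t → ℝ) → U1 t) (u2 : U2 t) :
    Jval S P T t π2 ≤ actionValue S P T t π2 γ u2 := by
  have : Nonempty (U1 t) := ⟨γ 0⟩
  rw [Jval_eq_iInf_actionValue S P T hπ]
  exact (ciInf_le (Set.finite_range _).bddBelow u2).trans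
    (ciInf_le (finite_range_actionValue S π2 P T u2).bddBelow γ)

theorem exists_actionValue_eq_Jval [Nonempty (U1 t)] [Nonempty (U2 t)] (hπ : ∀ sl, 0 ≤ π2 sl) :
    ∃ γ u2, actionValue S P T t π2 γ u2 = Jval S P T t π2 := by
  rw [Jval_eq_iInf_actionValue S P T hπ]
  obtain ⟨u2, hu2⟩ := exists_eq_ciInf_of_finite (f := fun u2 => ⨅ γ, actionValue S P T t π2 γ u2)
  obtain ⟨γ, hγ⟩ := (Set.range_nonempty _).csInf_mem (finite_range_actionValue S π2 P T u2)
  exact ⟨γ, u2, hγ.trans hu2⟩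

end DynamicProgram

section PerformanceDifference

variable {X U1 U2 W V1 V2 Y1 Y2 : ℕ → Type} [∀ t, Fintype (X t)] [∀ t, Fintype (U1 t)]
  [∀ t, Fintype (U2 t)] [∀ t, Fintype (W t)] [∀ t, Fintype (V1 t)] [∀ t, Fintype (V2 t)]
  [∀ t, Fintype (Y1 t)] [∀ t, Fintype (Y2 t)] [∀ t, Inhabited (W t)] [∀ t, Inhabited (V1 t)]
  [∀ t, Inhabited (V2 t)] (S : Sys X U1 U2 W V1 V2 Y1 Y2) (g : Strat U1 U2 Y1 Y2)
  (P : PrimPMF X W V1 V2) (T t : ℕ)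

/-- The Bellman gap `Q_t(Π²_t, Γ_t, U²_t) - J_t(Π²_t)`: the excess expected cost of the stage-`t`
laws of `g` over optimal ones. -/
def bellmanGap (ψ : M2 Y2 U2 t → (X t → ℝ) → U1 t) (ω : ΩT X W V1 V2 T) : ℝ :=
  actionValue S P T t (infoState2 S g P T ω t) (ψ (m2Traj S g (toPrim T ω) t))
    (u2Traj S g (toPrim T ω) t) - Jval S P T t (infoState2 S g P T ω t)

theorem bellmanGap_nonneg (ψ : M2 Y2 U2 t → (X t → ℝ) → U1 t) (ω : ΩT X W V1 V2 T) :
    0 ≤ bellmanGap S g P T t ψ ω :=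
  sub_nonneg.2 (Jval_le_actionValue S P T (infoState2At_nonneg S g P T t _) _ _)

variable {S g P T t}

theorem CompatAt.condExp_stageCost_add {ψ : M2 Y2 U2 t → (X t → ℝ) → U1 t}
    (hψ : CompatAt S g P T t ψ) (m : M2 Y2 U2 t) :
    condExp (mass P T) (fun ω => stageCost S g (toPrim T ω) t +
        stoppedVal S P T (t + 1) (infoState2 S g P T ω (t + 1)))
        (fun ω => m2Traj S g (toPrim T ω) t = m) =
      actionValue S P T t (infoState2At S g P T t m) (ψ m) (g.g2 t m) := by
  rw [condExp_add, hψ.condExp_stageCost, actionValue]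
  congr 1
  by_cases ht : t < T
  · exact hψ.condExp_infoState2_succ ht _ m
  · simp only [stoppedVal, Nat.succ_le_iff, ht, if_false, condExp, mul_zero, ite_self,
      sum_const_zero, zero_div]

theorem CompatAt.sum_mass_mul_stageCost {ψ : M2 Y2 U2 t → (X t → ℝ) → U1 t}
    (hψ : CompatAt S g P T t ψ) (ht : t ≤ T) :
    ∑ ω, mass P T ω * stageCost S g (toPrim T ω) t =
      ∑ ω, mass P T ω * bellmanGap S g P T t ψ ω -
        (∑ ω, mass P T ω * stoppedVal S P T (t + 1) (infoState2 S g P T ω (t + 1)) -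
          ∑ ω, mass P T ω * stoppedVal S P T t (infoState2 S g P T ω t)) := by
  have tower : ∑ ω, mass P T ω * actionValue S P T t (infoState2 S g P T ω t)
        (ψ (m2Traj S g (toPrim T ω) t)) (u2Traj S g (toPrim T ω) t) =
      ∑ ω, mass P T ω * (stageCost S g (toPrim T ω) t +
        stoppedVal S P T (t + 1) (infoState2 S g P T ω (t + 1))) := by
    refine Eq.trans ?_ (sum_mul_condExp (mass_nonneg P) (fun ω => m2Traj S g (toPrim T ω) t) _)
    simp only [hψ.condExp_stageCost_add]
    rfl
  have val_eq : stoppedVal S P T t = Jval S P T t := funext fun _ => if_pos ht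
  simp only [mul_add, sum_add_distrib] at tower
  simp only [val_eq, bellmanGap, mul_sub, sum_sub_distrib]
  linarith

theorem costToGo_eq_add_bellmanGap (ht : t ≤ T) {ψ : ∀ s, M2 Y2 U2 s → (X s → ℝ) → U1 s}
    (hψ : ∀ s, t ≤ s → s ≤ T → CompatAt S g P T s (ψ s)) :
    costToGo S g P T t = ∑ ω, mass P T ω * Jval S P T t (infoState2 S g P T ω t) +
      ∑ s ∈ Icc t T, ∑ ω, mass P T ω * bellmanGap S g P T s (ψ s) ω := by
  let v (s : ℕ) : ℝ := ∑ ω, mass P T ω * stoppedVal S P T s (infoState2 S g P T ω s)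
  have v_initial : v t = ∑ ω, mass P T ω * Jval S P T t (infoState2 S g P T ω t) := by
    simp only [v, stoppedVal, ht, if_true]
  have v_final : v (T + 1) = 0 := by
    simp only [v, stoppedVal, Nat.not_succ_le_self, if_false, mul_zero, sum_const_zero]
  calc
    _ = ∑ s ∈ Icc t T, ∑ ω, mass P T ω * stageCost S g (toPrim T ω) s := by
      simp only [costToGo, mul_sum]
      exact sum_comm
    _ = ∑ s ∈ Icc t T, (∑ ω, mass P T ω * bellmanGap S g P T s (ψ s) ω - (v (s + 1) - v s)) := by
      refine sum_congr rfl fun s hs => ?_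
      obtain ⟨hts, hsT⟩ := mem_Icc.1 hs
      exact (hψ s hts hsT).sum_mass_mul_stageCost hsT
    _ = _ := by rw [sum_sub_distrib, sum_Icc_sub ht, v_initial, v_final]; ring

end PerformanceDifference

section FeedbackLaws

variable {X U1 U2 W V1 V2 Y1 Y2 : ℕ → Type} [∀ t, Fintype (X t)] [∀ t, Fintype (W t)]
  [∀ t, Fintype (V1 t)] [∀ t, Fintype (V2 t)] [∀ t, Inhabited (W t)] [∀ t, Inhabited (V1 t)]
  [∀ t, Inhabited (V2 t)] (S : Sys X U1 U2 W V1 V2 Y1 Y2) (g : Strat U1 U2 Y1 Y2)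
  (P : PrimPMF X W V1 V2) (T t : ℕ)

/-- The stage-`t` laws of `g` are of the structural form `U¹_t = ψ(Π²_t)(Π¹_t)`,
`U²_t = u(Π²_t)`. -/
def IsFeedbackAt (ψ : (X t × Lp Y1 U1 t → ℝ) → (X t → ℝ) → U1 t)
    (u : (X t × Lp Y1 U1 t → ℝ) → U2 t) : Prop :=
  (∀ m, g.g1 t m = ψ (infoState2At S g P T t m.2) (infoState1At S g P T t m)) ∧
    ∀ m, g.g2 t m = u (infoState2At S g P T t m)

variable {S g P T t} in
theorem IsFeedbackAt.compatAt {ψ : (X t × Lp Y1 U1 t → ℝ) → (X t → ℝ) → U1 t}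
    {u : (X t × Lp Y1 U1 t → ℝ) → U2 t} (h : IsFeedbackAt S g P T t ψ u) :
    CompatAt S g P T t fun m => ψ (infoState2At S g P T t m) :=
  fun _ _ => h.1 _

variable {S g P T t} in
theorem IsFeedbackAt.congr {g' : Strat U1 U2 Y1 Y2}
    {ψ : (X t × Lp Y1 U1 t → ℝ) → (X t → ℝ) → U1 t} {u : (X t × Lp Y1 U1 t → ℝ) → U2 t}
    (h : IsFeedbackAt S g P T t ψ u)
    (hg : ∀ s, s ≤ t → g.g1 s = g'.g1 s ∧ g.g2 s = g'.g2 s) : IsFeedbackAt S g' P T t ψ u := by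
  obtain ⟨infoState1_eq, infoState2_eq⟩ := infoStateAt_congr S P T fun s hs => hg s hs.le
  rwa [IsFeedbackAt, ← infoState1_eq, ← infoState2_eq, ← (hg t le_rfl).1, ← (hg t le_rfl).2]

theorem exists_isFeedbackAt_from (ψ : ∀ s, (X s × Lp Y1 U1 s → ℝ) → (X s → ℝ) → U1 s)
    (u : ∀ s, (X s × Lp Y1 U1 s → ℝ) → U2 s) (n : ℕ) :
    ∃ g' : Strat U1 U2 Y1 Y2, (∀ s, s < t → g'.g1 s = g.g1 s ∧ g'.g2 s = g.g2 s) ∧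
      ∀ s, t ≤ s → s < n → IsFeedbackAt S g' P T s (ψ s) (u s) := by
  induction n with
  | zero => exact ⟨g, fun _ _ => ⟨rfl, rfl⟩, fun _ _ hs => absurd hs (Nat.not_lt_zero _)⟩
  | succ n ih =>
    obtain ⟨g', before, feedback⟩ := ih
    rcases lt_or_ge n t with hn | hn
    · exact ⟨g', before, fun s hts hs => absurd hts (by omega)⟩
    let g'' : Strat U1 U2 Y1 Y2 :=
      { g1 := Function.update g'.g1 n fun m =>
          ψ n (infoState2At S g' P T n m.2) (infoState1At S g' P T n m)
        g2 := Function.update g'.g2 n fun m => u n (infoState2At S g' P T n m) }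
    have g''_of_ne (s : ℕ) (hs : s ≠ n) : g'.g1 s = g''.g1 s ∧ g'.g2 s = g''.g2 s :=
      ⟨(Function.update_of_ne hs _ _).symm, (Function.update_of_ne hs _ _).symm⟩
    refine ⟨g'', fun s hs => ?_, fun s hts hs => ?_⟩
    · rw [← (g''_of_ne s (by omega)).1, ← (g''_of_ne s (by omega)).2]
      exact before s hs
    · rcases (Nat.lt_succ_iff.1 hs).lt_or_eq with hs | rfl
      · exact (feedback s hts hs).congr fun r hr => g''_of_ne r (by omega)
      · obtain ⟨infoState1_eq, infoState2_eq⟩ :=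
          infoStateAt_congr S P T (g := g') (g' := g'') fun r hr => g''_of_ne r hr.ne
        rw [IsFeedbackAt, ← infoState1_eq, ← infoState2_eq]
        exact ⟨congrFun (Function.update_self ..), congrFun (Function.update_self ..)⟩

end FeedbackLaws

section Optimality

variable {X U1 U2 W V1 V2 Y1 Y2 : ℕ → Type} [∀ t, Fintype (X t)] [∀ t, Fintype (W t)]
  [∀ t, Fintype (V1 t)] [∀ t, Fintype (V2 t)]

theorem PrimPMF.nonempty_initial (P : PrimPMF X W V1 V2) : Nonempty (X 0) := by
  by_contra hX
  rw [not_nonempty_iff] at hX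
  exact zero_ne_one ((sum_of_isEmpty _).symm.trans P.pX0_sum)

variable [∀ t, Fintype (U1 t)] [∀ t, Fintype (U2 t)] [∀ t, Fintype (Y1 t)] [∀ t, Fintype (Y2 t)]
  [∀ t, Inhabited (W t)] [∀ t, Inhabited (V1 t)] [∀ t, Inhabited (V2 t)]
  (T : ℕ) (S : Sys X U1 U2 W V1 V2 Y1 Y2) (P : PrimPMF X W V1 V2) {t : ℕ} (ht : t ≤ T)
  (g : Strat U1 U2 Y1 Y2)

include ht

theorem sum_mass_mul_Jval_le_costToGo {ψ : ∀ s, M2 Y2 U2 s → (X s → ℝ) → U1 s}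
    (hψ : ∀ s, t ≤ s → s ≤ T → CompatAt S g P T s (ψ s)) :
    ∑ ω, mass P T ω * Jval S P T t (infoState2 S g P T ω t) ≤ costToGo S g P T t := by
  rw [costToGo_eq_add_bellmanGap ht hψ]
  exact le_add_of_nonneg_right (sum_nonneg fun s _ => sum_nonneg fun ω _ =>
    mul_nonneg (mass_nonneg P ω) (bellmanGap_nonneg S g P T s (ψ s) ω))

theorem costToGo_eq_of_argmin {ψ : ∀ s, (X s × Lp Y1 U1 s → ℝ) → (X s → ℝ) → U1 s}
    {u : ∀ s, (X s × Lp Y1 U1 s → ℝ) → U2 s}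
    (hg : ∀ s, t ≤ s → s ≤ T → IsFeedbackAt S g P T s (ψ s) (u s))
    (argmin : ∀ s π2, (∀ sl, 0 ≤ π2 sl) →
      actionValue S P T s π2 (ψ s π2) (u s π2) = Jval S P T s π2) :
    costToGo S g P T t = ∑ ω, mass P T ω * Jval S P T t (infoState2 S g P T ω t) := by
  rw [costToGo_eq_add_bellmanGap ht fun s hts hsT => (hg s hts hsT).compatAt, add_eq_left]
  refine sum_eq_zero fun s hs => sum_eq_zero fun ω _ => ?_
  obtain ⟨hts, hsT⟩ := mem_Icc.1 hs
  rw [bellmanGap, u2Traj, (hg s hts hsT).2]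
  exact mul_eq_zero_of_right _ (sub_eq_zero.2 (argmin s _ (infoState2At_nonneg S g P T s _)))

theorem DP_optimality_general :
    (∀ ψ : ∀ s, M2 Y2 U2 s → (X s → ℝ) → U1 s,
      (∀ s, t ≤ s → s ≤ T → CompatAt S g P T s (ψ s)) →
      costToGo S g P T t ≥
        ∑ ω, mass P T ω * Jval S P T t (infoState2 S g P T ω t)) ∧
    ∃ (g' : Strat U1 U2 Y1 Y2)
      (ψstar : ∀ s, (X s × Lp Y1 U1 s → ℝ) → (X s → ℝ) → U1 s)
      (gstar2 : ∀ s, (X s × Lp Y1 U1 s → ℝ) → U2 s),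
      (∀ s, s < t → g'.g1 s = g.g1 s ∧ g'.g2 s = g.g2 s) ∧
      (∀ s, t ≤ s → s ≤ T → ∀ ω : ΩT X W V1 V2 T, 0 < mass P T ω →
        u1Traj S g' (toPrim T ω) s =
          ψstar s (infoState2 S g' P T ω s) (infoState1 S g' P T ω s) ∧
        u2Traj S g' (toPrim T ω) s = gstar2 s (infoState2 S g' P T ω s)) ∧
      costToGo S g' P T t =
        ∑ ω, mass P T ω * Jval S P T t (infoState2 S g' P T ω t) := by
  refine ⟨fun ψ hψ => sum_mass_mul_Jval_le_costToGo T S P ht g hψ, ?_⟩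
  obtain ⟨x0⟩ := P.nonempty_initial
  let ρ : Prim X W V1 V2 := ⟨x0, default, default, default⟩
  have (s : ℕ) : Nonempty (U1 s) := ⟨u1Traj S g ρ s⟩
  have (s : ℕ) : Nonempty (U2 s) := ⟨u2Traj S g ρ s⟩
  choose! ψ u argmin using fun s (π2 : X s × Lp Y1 U1 s → ℝ) =>
    exists_actionValue_eq_Jval S P T (π2 := π2)
  obtain ⟨g', before, feedback⟩ := exists_isFeedbackAt_from S g P T t ψ u (T + 1)
  have feedback_le (s : ℕ) (hts : t ≤ s) (hsT : s ≤ T) : IsFeedbackAt S g' P T s (ψ s) (u s) :=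
    feedback s hts (Nat.lt_succ_of_le hsT)
  exact ⟨g', ψ, u, before,
    fun s hts hsT ω _ => ⟨(feedback_le s hts hsT).1 _, (feedback_le s hts hsT).2 _⟩,
    costToGo_eq_of_argmin T S P ht g' feedback_le argmin⟩

end Optimality

/-- Theorem 3 of the paper. For every `t < T`:
(1) for every admissible team strategy of the structural form
`U¹_ℓ = φ1 ℓ (Π¹_ℓ, Π²_ℓ)`, `U²_ℓ = φ2 ℓ (Π²_ℓ)`, the expected cost-to-go
satisfies `𝒥_t(g) ≥ E[J_t(Π²_t)]`; and (2) some strategy `g'` agreeing with `g`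
before time `t`, whose laws from time `t` on are the argmin prescription/control
laws of the dynamic program (in particular of the structural form
`U¹_s = ψstar s (Π²_s)(Π¹_s)`, `U²_s = gstar2 s (Π²_s)`), achieves equality:
`𝒥_t(g') = E[J_t(Π²_t)]`. -/
theorem DP_optimality
    (T : ℕ) (S : Sys X U1 U2 W V1 V2 Y1 Y2) (P : PrimPMF X W V1 V2) :
    ∀ t, t < T →
      ∀ (g : Strat U1 U2 Y1 Y2)
        (φ1 : ∀ s, (X s → ℝ) → (X s × Lp Y1 U1 s → ℝ) → U1 s)
        (φ2 : ∀ s, (X s × Lp Y1 U1 s → ℝ) → U2 s),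
        (∀ s, s ≤ T → ∀ ω : ΩT X W V1 V2 T, 0 < mass P T ω →
          u1Traj S g (toPrim T ω) s =
            φ1 s (infoState1 S g P T ω s) (infoState2 S g P T ω s)) →
        (∀ s, s ≤ T → ∀ ω : ΩT X W V1 V2 T, 0 < mass P T ω →
          u2Traj S g (toPrim T ω) s = φ2 s (infoState2 S g P T ω s)) →
        -- (1) lower bound on the expected cost-to-go
        (costToGo S g P T t ≥
          ∑ ω : ΩT X W V1 V2 T, mass P T ω * Jval S P T t (infoState2 S g P T ω t)) ∧
        -- (2) equality for the argmin laws from time `t` onward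
        (∃ (g' : Strat U1 U2 Y1 Y2)
           (ψstar : ∀ s, (X s × Lp Y1 U1 s → ℝ) → (X s → ℝ) → U1 s)
           (gstar2 : ∀ s, (X s × Lp Y1 U1 s → ℝ) → U2 s),
          (∀ s, s < t → g'.g1 s = g.g1 s ∧ g'.g2 s = g.g2 s) ∧
          (∀ s, t ≤ s → s ≤ T → ∀ ω : ΩT X W V1 V2 T, 0 < mass P T ω →
            u1Traj S g' (toPrim T ω) s =
              ψstar s (infoState2 S g' P T ω s) (infoState1 S g' P T ω s) ∧
            u2Traj S g' (toPrim T ω) s = gstar2 s (infoState2 S g' P T ω s)) ∧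
          costToGo S g' P T t =
            ∑ ω : ΩT X W V1 V2 T, mass P T ω * Jval S P T t (infoState2 S g' P T ω t)) := by
  intro t ht g φ1 _ hφ1 _
  obtain ⟨lower, attained⟩ := DP_optimality_general T S P ht.le g
  exact ⟨lower (fun s m π1 => φ1 s π1 (infoState2At S g P T s m)) fun s _ => hφ1 s, attained⟩

end

end NestedTeam
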